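/- Furuta's inequality: let A, B be positive semidefinite matrices with A ≥ B, let r ≥ 0, p ≥ 1, and q ≥ (p+r)/(1+r). Then A^{(p+r)/q} ≥ (A^{r/2} B^p A^{r/2})^{1/q}. -/

import Mathlib

open scoped Matrix ComplexOrder

/-- `A^p` for a matrix, via continuous functional calculus with the real power function. -/
noncomputable def mpow {n : ℕ} (A : Matrix (Fin n) (Fin n) ℂ) (p : ℝ) : Matrix (Fin n) (Fin n) ℂ :=
  cfc (fun x : ℝ => x ^ p) A

/-- Matrix absolute value `|X| = (XᴴX)^{1/2}`. -/
noncomputable def matAbs {n : ℕ} (X : Matrix (Fin n) (Fin n) ℂ) : Matrix (Fin n) (Fin n) ℂ :=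
  cfc Real.sqrt (Xᴴ * X)

/-- Loewner order: `X ≤ Y` iff `Y - X` is positive semidefinite. -/
def loewnerLE {n : ℕ} (X Y : Matrix (Fin n) (Fin n) ℂ) : Prop := (Y - X).PosSemidef

/-!
For strictly positive `b ≤ a` the heart of the matter is the critical exponent
`q = (p + r) / (1 + r)` with `1 ≤ p`. The polar decomposition of `a ^ (r / 2) * b ^ (p / 2)` turns
the positive power `(1 + r) / (p + r)` of `a ^ (r / 2) * b ^ p * a ^ (r / 2)` into the power
`-(p - 1) / (p + r)` of `b ^ (p / 2) * a ^ r * b ^ (p / 2)`. If `r ≤ 1`, the Löwner–Heinz inequality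
gives `b ^ (p + r) ≤ b ^ (p / 2) * a ^ r * b ^ (p / 2)`, and raising this to a power in `[-1, 0]`
reverses it. To pass from `r` to `r + 1`, apply the case just proved, with `1 / (1 + r)` and
`(p + r) / (1 + r)` in place of `r` and `p`, to the inequality
`(a ^ (r / 2) * b ^ p * a ^ (r / 2)) ^ ((1 + r) / (p + r)) ≤ a ^ (1 + r)`. Larger `q`, and all
`p ≤ 1 ≤ q`, follow by Löwner–Heinz, and singular `b` by replacing `a`, `b` with `a + t`, `b + t`
and letting `t` tend to `0` from above.
-/

open Filter Set Topology

section CStarAlgebra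

variable {𝒜 : Type*} [CStarAlgebra 𝒜] [PartialOrder 𝒜] [StarOrderedRing 𝒜]

lemma unitary_conj_rpow {u : 𝒜} (hu : u ∈ unitary 𝒜) {a : 𝒜} (ha : IsStrictlyPositive a) (s : ℝ) :
    (u * a * star u) ^ s = u * a ^ s * star u := by
  let φ := Unitary.conjStarAlgAut ℂ 𝒜 ⟨u, hu⟩
  have hφa : 0 ≤ φ a := star_right_conjugate_nonneg ha.nonneg u
  have hφ : Continuous φ := by
    change Continuous fun x => u * x * star u
    fun_prop
  have hcont : ContinuousOn (fun x : ℝ => x ^ s) (spectrum ℝ a) := fun x hx =>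
    (Real.continuousAt_rpow_const x s (.inl (ha.spectrum_pos hx).ne')).continuousWithinAt
  have hmap := StarAlgHomClass.map_cfc (S := ℂ) φ (fun x : ℝ => x ^ s) a hcont hφ
    ha.isSelfAdjoint (.of_nonneg hφa)
  rw [← CFC.rpow_eq_cfc_real ha.nonneg, ← CFC.rpow_eq_cfc_real hφa] at hmap
  exact hmap.symm

lemma isStrictlyPositive_star_mul_self {t : 𝒜} (ht : IsUnit t) :
    IsStrictlyPositive (star t * t) :=
  (ht.star.mul ht).isStrictlyPositive (star_mul_self_nonneg t)

/- The unitary part of the polar decomposition of `t`. -/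
lemma mul_rpow_neg_half_mem_unitary {t : 𝒜} (ht : IsUnit t) :
    t * (star t * t) ^ (-(1 / 2) : ℝ) ∈ unitary 𝒜 := by
  have hpos := isStrictlyPositive_star_mul_self ht
  refine (ht.mul (hpos.rpow _ _).isUnit).mem_unitary_of_star_mul_self ?_
  rw [star_mul, CFC.rpow_nonneg.star_eq, ← CFC.conjugate_rpow_neg_one_half (star t * t)]
  simp only [mul_assoc]

lemma mul_star_self_rpow {t : 𝒜} (ht : IsUnit t) (s : ℝ) :
    (t * star t) ^ s = t * (star t * t) ^ (s - 1) * star t := by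
  set h := star t * t
  have hpos : IsStrictlyPositive h := isStrictlyPositive_star_mul_self ht
  set u := t * h ^ (-(1 / 2) : ℝ) with u_def
  have u_conj (x : ℝ) : u * h ^ x * star u = t * h ^ (x - 1) * star t := by
    have hexp : h ^ (x - 1) = h ^ (-(1 / 2) : ℝ) * h ^ x * h ^ (-(1 / 2) : ℝ) := by
      rw [← CFC.rpow_add hpos.isUnit, ← CFC.rpow_add hpos.isUnit]
      ring_nf
    rw [hexp, u_def, star_mul, CFC.rpow_nonneg.star_eq]
    simp only [mul_assoc]
  have u_conj_self : u * h * star u = t * star t := by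
    simpa [CFC.rpow_one h, CFC.rpow_zero h] using u_conj 1
  rw [← u_conj_self, unitary_conj_rpow (mul_rpow_neg_half_mem_unitary ht) hpos, u_conj]

lemma rpow_conj_rpow_rpow {a b : 𝒜} (ha : IsStrictlyPositive a) (hb : IsStrictlyPositive b)
    (r p s : ℝ) :
    (a ^ (r / 2) * b ^ p * a ^ (r / 2)) ^ s =
      a ^ (r / 2) * (b ^ (p / 2) * (b ^ (p / 2) * a ^ r * b ^ (p / 2)) ^ (s - 1) * b ^ (p / 2)) *
        a ^ (r / 2) := by
  have hb_half : b ^ p = b ^ (p / 2) * b ^ (p / 2) := by rw [← CFC.rpow_add hb.isUnit, add_halves]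
  have ha_half : a ^ r = a ^ (r / 2) * a ^ (r / 2) := by rw [← CFC.rpow_add ha.isUnit, add_halves]
  have hpolar := mul_star_self_rpow ((ha.rpow a (r / 2)).isUnit.mul (hb.rpow b (p / 2)).isUnit) s
  rw [star_mul, CFC.rpow_nonneg.star_eq, CFC.rpow_nonneg.star_eq] at hpolar
  rw [hb_half, ha_half]
  simpa only [mul_assoc] using hpolar

lemma rpow_neg_le_rpow_neg {a b : 𝒜} (ha : IsStrictlyPositive a) (hab : a ≤ b) {s : ℝ}
    (hs : s ∈ Icc (0 : ℝ) 1) : b ^ (-s) ≤ a ^ (-s) := by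
  have hb := ha.of_le hab
  obtain rfl | hs0 := eq_or_ne s 0
  · simp [CFC.rpow_zero a, CFC.rpow_zero b]
  · rw [← CFC.inverse_rpow a s hs0, ← CFC.inverse_rpow b s hs0]
    exact CStarAlgebra.ringInverse_le_ringInverse (CFC.rpow_le_rpow hs hab)

lemma rpow_add_le_conj_rpow {a b : 𝒜} (hb : IsStrictlyPositive b) (hba : b ≤ a) {r : ℝ}
    (hr : r ∈ Icc (0 : ℝ) 1) (p : ℝ) : b ^ (p + r) ≤ b ^ (p / 2) * a ^ r * b ^ (p / 2) :=
  calc b ^ (p + r) = b ^ (p / 2) * b ^ r * b ^ (p / 2) := by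
        rw [← CFC.rpow_add hb.isUnit, ← CFC.rpow_add hb.isUnit]
        ring_nf
    _ ≤ b ^ (p / 2) * a ^ r * b ^ (p / 2) :=
        conjugate_le_conjugate_of_nonneg (CFC.rpow_le_rpow hr hba) CFC.rpow_nonneg

lemma conj_rpow_le_rpow_add {a b : 𝒜} (ha : IsStrictlyPositive a) {p : ℝ} (hba : b ≤ a ^ p)
    (r : ℝ) : a ^ (r / 2) * b * a ^ (r / 2) ≤ a ^ (p + r) :=
  calc a ^ (r / 2) * b * a ^ (r / 2) ≤ a ^ (r / 2) * a ^ p * a ^ (r / 2) :=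
        conjugate_le_conjugate_of_nonneg hba CFC.rpow_nonneg
    _ = a ^ (p + r) := by
        rw [← CFC.rpow_add ha.isUnit, ← CFC.rpow_add ha.isUnit]
        ring_nf

lemma furuta_critical_of_le_one {a b : 𝒜} (hb : IsStrictlyPositive b) (hba : b ≤ a) {r p : ℝ}
    (hr : r ∈ Icc (0 : ℝ) 1) (hp : 1 ≤ p) :
    (a ^ (r / 2) * b ^ p * a ^ (r / 2)) ^ ((1 + r) / (p + r)) ≤ a ^ (1 + r) := by
  have ha := hb.of_le hba
  have hpr : 0 < p + r := by linarith [hr.1]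
  have hs : (p - 1) / (p + r) ∈ Icc (0 : ℝ) 1 :=
    ⟨div_nonneg (by linarith) hpr.le, (div_le_one hpr).2 (by linarith [hr.1])⟩
  have hexp : (1 + r) / (p + r) - 1 = -((p - 1) / (p + r)) := by field_simp; ring
  have hexp_inner : (p + r) * -((p - 1) / (p + r)) = 1 - p := by field_simp; ring
  have hinner : (b ^ (p / 2) * a ^ r * b ^ (p / 2)) ^ (-((p - 1) / (p + r))) ≤ b ^ (1 - p) := by
    have := rpow_neg_le_rpow_neg (hb.rpow b (p + r)) (rpow_add_le_conj_rpow hb hba hr p) hs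
    rwa [CFC.rpow_rpow b _ _ hpr.ne', hexp_inner] at this
  have hcancel : b ^ (p / 2) * b ^ (1 - p) * b ^ (p / 2) = b := by
    have hexp_cancel : p / 2 + (1 - p) + p / 2 = 1 := by ring
    rw [← CFC.rpow_add hb.isUnit, ← CFC.rpow_add hb.isUnit, hexp_cancel, CFC.rpow_one b]
  calc (a ^ (r / 2) * b ^ p * a ^ (r / 2)) ^ ((1 + r) / (p + r))
      = a ^ (r / 2) * (b ^ (p / 2) * (b ^ (p / 2) * a ^ r * b ^ (p / 2)) ^ (-((p - 1) / (p + r))) *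
          b ^ (p / 2)) * a ^ (r / 2) := by rw [rpow_conj_rpow_rpow ha hb, hexp]
    _ ≤ a ^ (r / 2) * (b ^ (p / 2) * b ^ (1 - p) * b ^ (p / 2)) * a ^ (r / 2) :=
        conjugate_le_conjugate_of_nonneg
          (conjugate_le_conjugate_of_nonneg hinner CFC.rpow_nonneg) CFC.rpow_nonneg
    _ ≤ a ^ (1 + r) := by
        rw [hcancel]
        exact conj_rpow_le_rpow_add ha (hba.trans_eq (CFC.rpow_one a).symm) r

lemma furuta_critical_add_one {a b : 𝒜} (ha : IsStrictlyPositive a) (hb : IsStrictlyPositive b)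
    {r p : ℝ} (hr : 0 ≤ r) (hp : 1 ≤ p)
    (h : (a ^ (r / 2) * b ^ p * a ^ (r / 2)) ^ ((1 + r) / (p + r)) ≤ a ^ (1 + r)) :
    (a ^ ((r + 1) / 2) * b ^ p * a ^ ((r + 1) / 2)) ^ ((1 + (r + 1)) / (p + (r + 1))) ≤
      a ^ (1 + (r + 1)) := by
  set x := a ^ (r / 2) * b ^ p * a ^ (r / 2) with x_def
  have hx : IsStrictlyPositive x := .conjugate_of_isUnit_of_isSelfAdjoint _ _
    (ha.rpow a _).isUnit (.of_nonneg CFC.rpow_nonneg) (hb.rpow b p)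
  have h1r : 0 < 1 + r := by linarith
  have hpr : 0 < p + r := by linarith
  have hconj : a ^ (1 / 2 : ℝ) * x * a ^ (1 / 2 : ℝ) =
      a ^ ((r + 1) / 2) * b ^ p * a ^ ((r + 1) / 2) := by
    have hleft : a ^ ((r + 1) / 2) = a ^ (1 / 2 : ℝ) * a ^ (r / 2) := by
      rw [← CFC.rpow_add ha.isUnit]; ring_nf
    have hright : a ^ ((r + 1) / 2) = a ^ (r / 2) * a ^ (1 / 2 : ℝ) := by
      rw [← CFC.rpow_add ha.isUnit]; ring_nf
    nth_rw 1 [hleft]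
    rw [hright]
    simp only [x_def, mul_assoc]
  have hstep := furuta_critical_of_le_one (hx.rpow x _) h (r := 1 / (1 + r))
    (p := (p + r) / (1 + r)) ⟨by positivity, (div_le_one h1r).2 (by linarith)⟩
    ((one_le_div h1r).2 (by linarith))
  rw [CFC.rpow_rpow x _ _ (by positivity), CFC.rpow_rpow a _ _ h1r.ne',
    CFC.rpow_rpow a _ _ h1r.ne'] at hstep
  have hexp_half : (1 + r) * (1 / (1 + r) / 2) = 1 / 2 := by field_simp
  have hexp_one : (1 + r) / (p + r) * ((p + r) / (1 + r)) = 1 := by field_simp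
  have hexp_left : (1 + 1 / (1 + r)) / ((p + r) / (1 + r) + 1 / (1 + r)) =
      (1 + (r + 1)) / (p + (r + 1)) := by field_simp; ring
  have hexp_right : (1 + r) * (1 + 1 / (1 + r)) = 1 + (r + 1) := by field_simp; ring
  rwa [hexp_half, hexp_one, hexp_left, hexp_right, CFC.rpow_one x, hconj] at hstep

lemma furuta_critical {a b : 𝒜} (hb : IsStrictlyPositive b) (hba : b ≤ a) {r p : ℝ}
    (hr : 0 ≤ r) (hp : 1 ≤ p) :
    (a ^ (r / 2) * b ^ p * a ^ (r / 2)) ^ ((1 + r) / (p + r)) ≤ a ^ (1 + r) := by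
  obtain ⟨n, hn⟩ := exists_nat_ge r
  induction n generalizing r with
  | zero => exact furuta_critical_of_le_one hb hba ⟨hr, hn.trans (by simp)⟩ hp
  | succ n ih =>
    obtain hr1 | hr1 := le_total r 1
    · exact furuta_critical_of_le_one hb hba ⟨hr, hr1⟩ hp
    · have hr0 : 0 ≤ r - 1 := sub_nonneg.2 hr1
      have hrn : r - 1 ≤ n := by push_cast at hn; linarith
      simpa only [sub_add_cancel] using
        furuta_critical_add_one (hb.of_le hba) hb hr0 hp (ih hr0 hrn)

lemma furuta_of_isStrictlyPositive {a b : 𝒜} (hb : IsStrictlyPositive b) (hba : b ≤ a)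
    {r p q : ℝ} (hr : 0 ≤ r) (hp : 0 ≤ p) (hq : 1 ≤ q) (hpq : p + r ≤ (1 + r) * q) :
    (a ^ (r / 2) * b ^ p * a ^ (r / 2)) ^ (1 / q) ≤ a ^ ((p + r) / q) := by
  have ha := hb.of_le hba
  have hq0 : 0 < q := by linarith
  obtain hp1 | hp1 := le_total p 1
  · have hle : a ^ (r / 2) * b ^ p * a ^ (r / 2) ≤ a ^ (p + r) :=
      conj_rpow_le_rpow_add ha (CFC.rpow_le_rpow ⟨hp, hp1⟩ hba) r
    have hpow := CFC.rpow_le_rpow (p := 1 / q) ⟨by positivity, (div_le_one hq0).2 hq⟩ hle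
    rwa [CFC.rpow_rpow_of_exponent_nonneg a _ _ (by positivity) (by positivity),
      mul_one_div] at hpow
  · have h1r : 0 < 1 + r := by linarith
    have : 0 < p + r := by linarith
    have hx : 0 ≤ a ^ (r / 2) * b ^ p * a ^ (r / 2) :=
      conjugate_nonneg_of_nonneg CFC.rpow_nonneg CFC.rpow_nonneg
    have hs : (p + r) / ((1 + r) * q) ∈ Icc (0 : ℝ) 1 :=
      ⟨by positivity, (div_le_one (by positivity)).2 hpq⟩
    have hpow := CFC.rpow_le_rpow hs (furuta_critical hb hba hr hp1)
    rw [CFC.rpow_rpow_of_exponent_nonneg _ _ _ (by positivity) hs.1,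
      CFC.rpow_rpow_of_exponent_nonneg a _ _ h1r.le hs.1] at hpow
    convert hpow using 2 <;> field_simp

lemma tendsto_rpow_of_nonneg {ι : Type*} {l : Filter ι} {f : ι → 𝒜} {a : 𝒜} {s : ℝ}
    (hs : 0 ≤ s) (hf : Tendsto f l (𝓝 a)) (hf0 : ∀ᶠ i in l, 0 ≤ f i) (ha : 0 ≤ a) :
    Tendsto (fun i => f i ^ s) l (𝓝 (a ^ s)) := by
  have hcont : ContinuousOn (fun x : 𝒜 => x ^ s) {x | 0 ≤ x} :=
    continuousOn_id.cfc_nnreal_of_mem_nhdsSet _ (s := univ) univ_mem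
      (hf := (NNReal.continuous_rpow_const hs).continuousOn)
  exact (hcont a ha).tendsto.comp (tendsto_nhdsWithin_iff.2 ⟨hf, hf0⟩)

lemma isStrictlyPositive_add_algebraMap {a : 𝒜} (ha : 0 ≤ a) {t : ℝ} (ht : 0 < t) :
    IsStrictlyPositive (a + algebraMap ℝ 𝒜 t) :=
  .nonneg_add ha (isStrictlyPositive_algebraMap ht)

lemma tendsto_add_algebraMap_rpow {a : 𝒜} (ha : 0 ≤ a) {s : ℝ} (hs : 0 ≤ s) :
    Tendsto (fun t : ℝ => (a + algebraMap ℝ 𝒜 t) ^ s) (𝓝[>] 0) (𝓝 (a ^ s)) := by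
  have hcont : Continuous fun t : ℝ => a + algebraMap ℝ 𝒜 t := by fun_prop
  have hlim : Tendsto (fun t : ℝ => a + algebraMap ℝ 𝒜 t) (𝓝[>] 0) (𝓝 a) := by
    simpa using (hcont.tendsto 0).mono_left nhdsWithin_le_nhds
  exact tendsto_rpow_of_nonneg hs hlim (eventually_mem_nhdsWithin.mono fun t ht =>
    (isStrictlyPositive_add_algebraMap ha ht).nonneg) ha

theorem furuta_general {a b : 𝒜} (hb : 0 ≤ b) (hba : b ≤ a) {r p q : ℝ} (hr : 0 ≤ r)
    (hp : 0 ≤ p) (hq : 1 ≤ q) (hpq : p + r ≤ (1 + r) * q) :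
    (a ^ (r / 2) * b ^ p * a ^ (r / 2)) ^ (1 / q) ≤ a ^ ((p + r) / q) := by
  have ha : 0 ≤ a := hb.trans hba
  have hconj (x y : 𝒜) : 0 ≤ x ^ (r / 2) * y ^ p * x ^ (r / 2) :=
    conjugate_nonneg_of_nonneg CFC.rpow_nonneg CFC.rpow_nonneg
  have ha_half := tendsto_add_algebraMap_rpow ha (s := r / 2) (by positivity)
  have hleft := tendsto_rpow_of_nonneg (s := 1 / q) (by positivity)
    ((ha_half.mul (tendsto_add_algebraMap_rpow hb hp)).mul ha_half)
    (.of_forall fun t => hconj _ _) (hconj a b)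
  have hright := tendsto_add_algebraMap_rpow ha (s := (p + r) / q) (by positivity)
  refine le_of_tendsto_of_tendsto hleft hright (eventually_mem_nhdsWithin.mono fun t ht => ?_)
  exact furuta_of_isStrictlyPositive (isStrictlyPositive_add_algebraMap hb ht)
    (add_le_add_left hba _) hr hp hq hpq

end CStarAlgebra

open scoped Matrix.Norms.L2Operator MatrixOrder

lemma mpow_eq_rpow {n : ℕ} {A : Matrix (Fin n) (Fin n) ℂ} (hA : 0 ≤ A) (p : ℝ) :
    mpow A p = A ^ p :=
  (CFC.rpow_eq_cfc_real hA).symm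

/-- Furuta's inequality: if `A ≥ B ≥ 0`, `r ≥ 0`, `p ≥ 1` and `q ≥ (p+r)/(1+r)`, then
`A^{(p+r)/q} ≥ (A^{r/2} B^p A^{r/2})^{1/q}`. -/
theorem furuta {n : ℕ} (A B : Matrix (Fin n) (Fin n) ℂ)
    (hA : A.PosSemidef) (hB : B.PosSemidef) (hBA : loewnerLE B A)
    (r p q : ℝ) (hr : 0 ≤ r) (hp : 1 ≤ p) (hq : (p + r) / (1 + r) ≤ q) :
    loewnerLE (mpow (mpow A (r / 2) * mpow B p * mpow A (r / 2)) (1 / q))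
      (mpow A ((p + r) / q)) := by
  have h1r : 0 < 1 + r := by linarith
  have hq1 : 1 ≤ q := ((one_le_div h1r).2 (by linarith)).trans hq
  rw [mpow_eq_rpow hA.nonneg, mpow_eq_rpow hA.nonneg, mpow_eq_rpow hB.nonneg,
    mpow_eq_rpow (conjugate_nonneg_of_nonneg CFC.rpow_nonneg CFC.rpow_nonneg)]
  exact furuta_general hB.nonneg hBA hr (by linarith) hq1 ((div_le_iff₀' h1r).1 hq)
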